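/- arXiv:math/0512463 — 3 statements merged into one kernel-verified Lean document; each statement's English description precedes it below -/
import Mathlib

section
/- Let T > 0 and c ≥ 0, let g : [0,T] → [0,∞) be Lebesgue integrable, and let u : [0,T] → [0,∞) be absolutely continuous with u(0) = 0 and u'(t) ≤ 2c·u(t) + 2·√(u(t))·g(t) for almost every t ∈ [0,T]. Then sup_{t ∈ [0,T]} √(u(t)) ≤ e^{cT} ∫_0^T g(s) ds. -/
open MeasureTheory Set intervalIntegral

theorem ac_of_dist_le {f h : ℝ → ℝ} {a b K : ℝ} (hK : 0 < K)
    (hf : AbsolutelyContinuousOnInterval f a b)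
    (hd : ∀ x ∈ uIcc a b, ∀ y ∈ uIcc a b, dist (h x) (h y) ≤ K * dist (f x) (f y)) :
    AbsolutelyContinuousOnInterval h a b := by
  rw [absolutelyContinuousOnInterval_iff] at hf ⊢
  intro ε hε
  obtain ⟨δ, hδ, H⟩ := hf (ε / K) (by positivity)
  refine ⟨δ, hδ, fun E hE hs => ?_⟩
  have h1 := H E hE hs
  calc _ ≤ ∑ i ∈ Finset.range E.1, K * dist (f (E.2 i).1) (f (E.2 i).2) :=
        Finset.sum_le_sum fun i hi => hd _ (hE.1 i hi).1 _ (hE.1 i hi).2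
    _ = K * ∑ i ∈ Finset.range E.1, dist (f (E.2 i).1) (f (E.2 i).2) :=
        (Finset.mul_sum _ _ _).symm
    _ < K * (ε / K) := by gcongr
    _ = ε := by field_simp

theorem sqrt_lip {δ a b : ℝ} (hδ : 0 < δ) (ha : 0 ≤ a) (hb : 0 ≤ b) :
    dist (Real.sqrt (δ ^ 2 + a)) (Real.sqrt (δ ^ 2 + b)) ≤ δ⁻¹ * dist a b := by
  have hp : δ ≤ Real.sqrt (δ ^ 2 + a) := Real.le_sqrt_of_sq_le (by linarith)
  have hq : δ ≤ Real.sqrt (δ ^ 2 + b) := Real.le_sqrt_of_sq_le (by linarith)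
  have hp2 := Real.sq_sqrt (show 0 ≤ δ ^ 2 + a by positivity)
  have hq2 := Real.sq_sqrt (show 0 ≤ δ ^ 2 + b by positivity)
  set p := Real.sqrt (δ ^ 2 + a)
  set q := Real.sqrt (δ ^ 2 + b)
  rw [Real.dist_eq, Real.dist_eq, show a - b = (p - q) * (p + q) by linarith, abs_mul,
    abs_of_pos (show 0 < p + q by linarith), inv_mul_eq_div, le_div_iff₀ hδ]
  exact mul_le_mul_of_nonneg_left (by linarith) (abs_nonneg _)

/-- Gronwall-type lemma: if `u ≥ 0` is absolutely continuous on `[0,T]` (i.e. the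
indefinite integral of an integrable function `u'`), `u 0 = 0`, and
`u' t ≤ 2c u t + 2 √(u t) g t` a.e. on `[0,T]`, then
`sup_{t∈[0,T]} √(u t) ≤ e^{cT} ∫_0^T g`. -/
theorem sqrt_sup_le_of_gronwall
    (T : ℝ) (hT : 0 < T) (c : ℝ) (hc : 0 ≤ c)
    (u u' g : ℝ → ℝ)
    (hg_int : IntegrableOn g (Icc 0 T))
    (hg_nonneg : ∀ t ∈ Icc (0 : ℝ) T, 0 ≤ g t)
    (hu_nonneg : ∀ t ∈ Icc (0 : ℝ) T, 0 ≤ u t)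
    (hu'_int : IntegrableOn u' (Icc 0 T))
    (hu_ac : ∀ t ∈ Icc (0 : ℝ) T, u t = ∫ s in (0 : ℝ)..t, u' s)
    (hu0 : u 0 = 0)
    (hode : ∀ᵐ t ∂(volume.restrict (Icc (0 : ℝ) T)),
      u' t ≤ 2 * c * u t + 2 * Real.sqrt (u t) * g t) :
    ∀ t ∈ Icc (0 : ℝ) T,
      Real.sqrt (u t) ≤ Real.exp (c * T) * ∫ s in (0 : ℝ)..T, g s := by
  intro t ht
  have hTi : uIcc (0 : ℝ) T = Icc 0 T := uIcc_of_le hT.le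
  have hti : uIcc (0 : ℝ) t = Icc 0 t := uIcc_of_le ht.1
  have hgI : IntervalIntegrable g volume 0 T :=
    (intervalIntegrable_iff_integrableOn_Icc_of_le hT.le).2 hg_int
  have huI : IntervalIntegrable u' volume 0 T :=
    (intervalIntegrable_iff_integrableOn_Icc_of_le hT.le).2 hu'_int
  have hsub : uIcc (0 : ℝ) t ⊆ uIcc 0 T := by
    rw [hTi, hti]; exact Icc_subset_Icc_right ht.2
  have hG : ∫ s in (0 : ℝ)..t, g s ≤ ∫ s in (0 : ℝ)..T, g s := by
    refine integral_mono_interval le_rfl ht.1 ht.2 ?_ hgI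
    refine (ae_restrict_iff' measurableSet_Ioc).2 (Filter.Eventually.of_forall fun x hx => ?_)
    exact hg_nonneg x (Ioc_subset_Icc_self hx)
  have hUac := huI.absolutelyContinuousOnInterval_intervalIntegral (c := 0) (by simp)
  have hUd := huI.ae_hasDerivAt_integral
  set U : ℝ → ℝ := fun x => ∫ v in (0 : ℝ)..x, u' v with hU
  have hUu : ∀ x ∈ Icc (0 : ℝ) T, U x = u x := fun x hx => (hu_ac x hx).symm
  have key : ∀ δ > 0, Real.sqrt (u t) ≤
      Real.exp (c * T) * (δ + ∫ s in (0 : ℝ)..T, g s) := by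
    intro δ hδ
    have hSac : AbsolutelyContinuousOnInterval (fun x => Real.sqrt (δ ^ 2 + U x)) 0 T := by
      refine ac_of_dist_le (inv_pos.2 hδ) hUac fun x hx y hy => ?_
      rw [hTi] at hx hy
      refine sqrt_lip hδ ?_ ?_
      · rw [hUu x hx]; exact hu_nonneg x hx
      · rw [hUu y hy]; exact hu_nonneg y hy
    have hEac : AbsolutelyContinuousOnInterval (fun x => Real.exp (-(c * x))) 0 T := by
      apply ContDiffOn.absolutelyContinuousOnInterval
      fun_prop
    have hFac := (hEac.fun_mul hSac).mono hsub
    have hint := hFac.integral_deriv_eq_sub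
    have hle := integral_mono_ae_restrict ht.1 hFac.intervalIntegrable_deriv
      (hgI.mono_set hsub) (by
        rw [Filter.EventuallyLE, ae_restrict_iff' measurableSet_Icc]
        rw [ae_restrict_iff' measurableSet_Icc] at hode
        filter_upwards [hode, hUd] with x h1 h2 hx
        have hxT : x ∈ Icc (0 : ℝ) T := ⟨hx.1, hx.2.trans ht.2⟩
        have hd := h2 (hTi ▸ hxT) 0 (by simp)
        have hux := hu_nonneg x hxT
        have hgx := hg_nonneg x hxT
        have h1 := h1 hxT
        have hpos : 0 < δ ^ 2 + U x := by rw [hUu x hxT]; positivity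
        have hs := (hd.const_add (δ ^ 2)).sqrt hpos.ne'
        have he : HasDerivAt (fun x => Real.exp (-(c * x)))
            (Real.exp (-(c * x)) * (-(c * 1))) x :=
          (((hasDerivAt_id x).const_mul c).neg).exp
        have hF := he.mul hs
        refine (le_of_eq hF.deriv).trans ?_
        have hr2 := Real.sq_sqrt hpos.le
        have hr0 := Real.sqrt_pos.2 hpos
        have hru : Real.sqrt (u x) ≤ Real.sqrt (δ ^ 2 + U x) := by
          apply Real.sqrt_le_sqrt; rw [hUu x hxT]; nlinarith
        change _ * Real.sqrt (δ ^ 2 + U x) + _ * (u' x / (2 * Real.sqrt (δ ^ 2 + U x))) ≤ _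
        have hr2' : Real.sqrt (δ ^ 2 + U x) ^ 2 = δ ^ 2 + u x := by rw [hr2, hUu x hxT]
        set r := Real.sqrt (δ ^ 2 + U x)
        have hq : u' x / (2 * r) ≤ c * r + g x := by
          rw [div_le_iff₀ (by positivity)]
          have e1 : Real.sqrt (u x) * g x ≤ r * g x := by gcongr
          have e2 : c * u x ≤ c * r ^ 2 := by
            apply mul_le_mul_of_nonneg_left _ hc; rw [hr2']; nlinarith
          nlinarith
        have he1 : Real.exp (-(c * x)) ≤ 1 := by
          apply Real.exp_le_one_iff.2; have := mul_nonneg hc hx.1; linarith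
        have he0 := Real.exp_pos (-(c * x))
        have e3 := mul_le_mul_of_nonneg_left hq he0.le
        have e4 : Real.exp (-(c * x)) * g x ≤ 1 * g x := by gcongr
        nlinarith)
    rw [hint] at hle
    have hU0 : U 0 = 0 := by simp [hU]
    simp only [hU0, hUu t ht, mul_zero, neg_zero, Real.exp_zero, add_zero, one_mul,
      Real.sqrt_sq hδ.le] at hle
    have hut : Real.sqrt (u t) ≤ Real.sqrt (δ ^ 2 + u t) :=
      Real.sqrt_le_sqrt (by nlinarith)
    have hI : Real.exp (-(c * t)) * Real.sqrt (u t) ≤ δ + ∫ s in (0 : ℝ)..T, g s := by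
      have := mul_le_mul_of_nonneg_left hut (Real.exp_pos (-(c * t))).le
      linarith
    have hI0 : 0 ≤ δ + ∫ s in (0 : ℝ)..T, g s := le_trans (by positivity) hI
    calc Real.sqrt (u t) = Real.exp (c * t) * (Real.exp (-(c * t)) * Real.sqrt (u t)) := by
          rw [← mul_assoc, ← Real.exp_add]; simp
      _ ≤ Real.exp (c * t) * (δ + ∫ s in (0 : ℝ)..T, g s) := by gcongr
      _ ≤ _ := by
          apply mul_le_mul_of_nonneg_right _ hI0
          exact Real.exp_le_exp.2 (mul_le_mul_of_nonneg_left ht.2 hc)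
  apply le_of_forall_pos_le_add
  intro ε hε
  have hE := Real.exp_pos (c * T)
  have := key (ε / Real.exp (c * T)) (by positivity)
  rw [mul_add, mul_div_cancel₀ _ hE.ne'] at this
  linarith
end

section
/- Let T > 0, α > 0 and c ≥ 0. There exists a constant C > 0, depending only on α, c and T, with the following property: whenever u : [0,T] → [0,∞) is absolutely continuous with u(0) = 0, v : [0,T] → [0,∞) is Lebesgue integrable, g : [0,T] → [0,∞) is square integrable, and u'(t) ≤ −2α·v(t) + 2c·u(t) + 2·√(u(t))·g(t) for almost every t ∈ [0,T], one has ∫_0^T v(t) dt ≤ C ∫_0^T g(t)² dt. -/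
open MeasureTheory Set intervalIntegral

/-- Deterministic integral inequality: for `T, α > 0` and `c ≥ 0` there is a constant
`C > 0` (depending only on `α, c, T`) such that whenever `u ≥ 0` is absolutely
continuous on `[0,T]` with `u 0 = 0`, `v ≥ 0` is integrable, `g ≥ 0` is square
integrable and `u' ≤ -2α v + 2c u + 2 √u g` a.e., one has `∫_0^T v ≤ C ∫_0^T g²`. -/
theorem integral_le_of_gronwall_dissipative
    (T α c : ℝ) (hT : 0 < T) (hα : 0 < α) (hc : 0 ≤ c) :
    ∃ C : ℝ, 0 < C ∧
      ∀ u u' v g : ℝ → ℝ,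
        (∀ t ∈ Icc (0 : ℝ) T, 0 ≤ u t) →
        u 0 = 0 →
        IntegrableOn u' (Icc 0 T) →
        (∀ t ∈ Icc (0 : ℝ) T, u t = ∫ s in (0 : ℝ)..t, u' s) →
        (∀ t ∈ Icc (0 : ℝ) T, 0 ≤ v t) →
        IntegrableOn v (Icc 0 T) →
        (∀ t ∈ Icc (0 : ℝ) T, 0 ≤ g t) →
        IntegrableOn (fun t => g t ^ 2) (Icc 0 T) →
        (∀ᵐ t ∂(volume.restrict (Icc (0 : ℝ) T)),
          u' t ≤ -(2 * α) * v t + 2 * c * u t + 2 * Real.sqrt (u t) * g t) →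
        ∫ t in (0 : ℝ)..T, v t ≤ C * ∫ t in (0 : ℝ)..T, g t ^ 2 := by
  set K : ℝ := 2 * c + 1 with hK
  have hKpos : 0 < K := by positivity
  refine ⟨Real.exp (K * T) / (2 * α), by positivity, ?_⟩
  intro u u' v g hu _ hderi huU hv hvi _ hgi hineq
  have ii : ∀ {f : ℝ → ℝ}, IntegrableOn f (Icc 0 T) → IntervalIntegrable f volume 0 T :=
    fun {f} hf => (intervalIntegrable_iff_integrableOn_Icc_of_le hT.le).2 hf
  have h0T : uIcc (0 : ℝ) T = Icc 0 T := uIcc_of_le hT.le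
  let U : ℝ → ℝ := fun t => ∫ s in (0 : ℝ)..t, u' s
  let E : ℝ → ℝ := fun t => Real.exp (-K * t)
  have hU : AbsolutelyContinuousOnInterval U 0 T :=
    (ii hderi).absolutelyContinuousOnInterval_intervalIntegral (c := 0) (by simp)
  have hE : AbsolutelyContinuousOnInterval E 0 T := by
    apply ContDiffOn.absolutelyContinuousOnInterval
    fun_prop
  have hdE : ∀ t, deriv E t = -K * E t := by
    intro t
    have h := ((hasDerivAt_id t).const_mul (-K)).exp
    have h2 := h.deriv
    simp only [id] at h2
    change deriv (fun t => Real.exp (-K * t)) t = _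
    rw [h2]
    simp only [E]
    ring
  have key := hU.integral_deriv_mul_eq_sub hE
  have hU0 : U 0 = 0 := by simp [U]
  have hUT : 0 ≤ U T := by
    have h1 := hu T ⟨hT.le, le_rfl⟩
    rwa [huU T ⟨hT.le, le_rfl⟩] at h1
  have hpos : 0 ≤ ∫ x in (0 : ℝ)..T, deriv U x * E x + U x * deriv E x := by
    rw [key, hU0]
    have : 0 < E T := Real.exp_pos _
    nlinarith [mul_nonneg hUT this.le]
  have hvI := (ii hvi).const_mul (-(2 * α * E T))
  have hgI := ii hgi
  have hle : ∫ x in (0 : ℝ)..T, deriv U x * E x + U x * deriv E x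
      ≤ ∫ x in (0 : ℝ)..T, (-(2 * α * E T) * v x + g x ^ 2) := by
    apply intervalIntegral.integral_mono_ae_restrict hT.le
    · exact (hU.intervalIntegrable_deriv.mul_continuousOn hE.continuousOn).add
        (hE.intervalIntegrable_deriv.continuousOn_mul hU.continuousOn)
    · exact hvI.add hgI
    · filter_upwards [hineq, ae_restrict_mem measurableSet_Icc,
        ae_restrict_of_ae (ii hderi).ae_hasDerivAt_integral] with t h1 ht h2
      have h3 : deriv U t = u' t :=
        (h2 (by rw [h0T]; exact ht) 0 (by simp)).deriv
      have h4 : U t = u t := (huU t ht).symm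
      rw [h3, h4, hdE]
      have hut := hu t ht
      have hsq := Real.sq_sqrt hut
      have h5 : u' t ≤ -(2 * α) * v t + K * u t + g t ^ 2 := by
        nlinarith [sq_nonneg (Real.sqrt (u t) - g t)]
      have hE0 : 0 < E t := Real.exp_pos _
      have hE1 : E t ≤ 1 := by
        apply Real.exp_le_one_iff.2
        nlinarith [mul_nonneg hKpos.le ht.1]
      have hE2 : E T ≤ E t := by
        apply Real.exp_le_exp.2
        nlinarith [mul_le_mul_of_nonneg_left ht.2 hKpos.le]
      have h6 := mul_le_mul_of_nonneg_right h5 hE0.le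
      have h7 := mul_le_mul_of_nonneg_left hE1 (sq_nonneg (g t))
      have h8 := mul_le_mul_of_nonneg_left hE2 (mul_nonneg (mul_nonneg zero_le_two hα.le) (hv t ht))
      linarith
  rw [intervalIntegral.integral_add hvI hgI, intervalIntegral.integral_const_mul] at hle
  have hfin : (2 * α * E T) * ∫ x in (0 : ℝ)..T, v x ≤ ∫ x in (0 : ℝ)..T, g x ^ 2 := by
    linarith
  have hEE : Real.exp (K * T) * E T = 1 := by
    simp only [E]
    rw [← Real.exp_add]
    simp
  have hC : (0 : ℝ) < Real.exp (K * T) / (2 * α) := by positivity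
  calc ∫ t in (0 : ℝ)..T, v t
      = Real.exp (K * T) / (2 * α) * ((2 * α * E T) * ∫ x in (0 : ℝ)..T, v x) := by
        field_simp
        rw [mul_assoc, hEE, mul_one]
    _ ≤ _ := mul_le_mul_of_nonneg_left hfin hC.le
end

section
/- Let T > 0, let B be a real Banach space, and equip C([0,T]; B) with the supremum norm. For w ∈ C([0,T]; B) and N ∈ ℕ let w^{(N)} denote its N-times piecewise linear approximation. Let I : C([0,T]; B) → [0, +∞] be a function all of whose sublevel sets {w : I(w) ≤ r}, r ≥ 0, are compact. Then for every δ > 0, lim_{N→∞} inf{ I(w) : w ∈ C([0,T]; B), sup_{t ∈ [0,T]} ‖w_t − w^{(N)}_t‖ ≥ δ } = +∞, with the convention inf ∅ = +∞. -/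
open Filter Topology Set

/-- The `N`-times piecewise linear approximation of a continuous path
`w : [0,T] → B`: on `[t_i, t_{i+1}]` with `t_i = iT/N` it equals
`(N/T)[(t - t_i) w_{t_{i+1}} + (t_{i+1} - t) w_{t_i}]`. -/
noncomputable def piecewiseLinear {B : Type*} [NormedAddCommGroup B] [NormedSpace ℝ B]
    {T : ℝ} (hT : 0 ≤ T) (w : C(Set.Icc (0 : ℝ) T, B)) (N : ℕ)
    (t : Set.Icc (0 : ℝ) T) : B :=
  let i : ℕ := min ⌊(t : ℝ) * N / T⌋₊ (N - 1)
  ((N : ℝ) / T) •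
    ((((t : ℝ) - (i : ℝ) * T / N) • w (Set.projIcc 0 T hT (((i : ℝ) + 1) * T / N))) +
      ((((i : ℝ) + 1) * T / N - (t : ℝ)) • w (Set.projIcc 0 T hT ((i : ℝ) * T / N))))

theorem piecewiseLinear_dist_le {B : Type*} [NormedAddCommGroup B] [NormedSpace ℝ B]
    {T : ℝ} (hT : 0 < T) (w : C(Set.Icc (0 : ℝ) T, B)) (N : ℕ) (hN : 0 < N) (ε : ℝ)
    (h : ∀ s t : Set.Icc (0 : ℝ) T, |(t : ℝ) - s| ≤ T / N → ‖w t - w s‖ ≤ ε)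
    (t : Set.Icc (0 : ℝ) T) : ‖w t - piecewiseLinear hT.le w N t‖ ≤ ε := by
  obtain ⟨t, ht0, htT⟩ := t
  have hNr : (0 : ℝ) < N := by exact_mod_cast hN
  unfold piecewiseLinear
  simp only
  set i : ℕ := min ⌊t * N / T⌋₊ (N - 1) with hi
  have hq0 : 0 ≤ t * N / T := by positivity
  have h1 : (i : ℝ) ≤ t * N / T :=
    le_trans (by exact_mod_cast min_le_left _ _) (Nat.floor_le hq0)
  have hiN : (i : ℝ) + 1 ≤ N := by
    have : i ≤ N - 1 := min_le_right _ _
    have : i + 1 ≤ N := by omega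
    exact_mod_cast this
  have h2 : t * N / T ≤ (i : ℝ) + 1 := by
    rcases min_choice ⌊t * N / T⌋₊ (N - 1) with hc | hc
    · rw [hi, hc]; exact (Nat.lt_floor_add_one _).le
    · have : i + 1 = N := by omega
      have : (i : ℝ) + 1 = N := by exact_mod_cast this
      rw [this, div_le_iff₀ hT]
      nlinarith
  have h1' : (i : ℝ) * T / N ≤ t := by
    rw [div_le_iff₀ hNr]; rwa [le_div_iff₀ hT] at h1
  have h2' : t ≤ ((i : ℝ) + 1) * T / N := by
    rw [le_div_iff₀ hNr]; rwa [div_le_iff₀ hT] at h2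
  have hgap : ((i : ℝ) + 1) * T / N = (i : ℝ) * T / N + T / N := by ring
  have hl : (i : ℝ) * T / N ∈ Set.Icc 0 T := ⟨by positivity, h1'.trans htT⟩
  have hr : ((i : ℝ) + 1) * T / N ∈ Set.Icc 0 T :=
    ⟨by positivity, by rw [div_le_iff₀ hNr]; nlinarith⟩
  rw [Set.projIcc_of_mem hT.le hl, Set.projIcc_of_mem hT.le hr]
  have hx := h ⟨_, hr⟩ ⟨t, ht0, htT⟩ (by rw [abs_le]; constructor <;> simp only <;> linarith)
  have hy := h ⟨_, hl⟩ ⟨t, ht0, htT⟩ (by rw [abs_le]; constructor <;> simp only <;> linarith)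
  generalize w ⟨_, hr⟩ = x at *
  generalize w ⟨_, hl⟩ = y at *
  generalize w ⟨t, ht0, htT⟩ = z at *
  obtain ⟨a, ha⟩ : ∃ a, a = (N : ℝ) / T * (t - (i : ℝ) * T / N) := ⟨_, rfl⟩
  obtain ⟨b, hb⟩ : ∃ b, b = (N : ℝ) / T * (((i : ℝ) + 1) * T / N - t) := ⟨_, rfl⟩
  have ha0 : 0 ≤ a := by rw [ha]; exact mul_nonneg (by positivity) (by linarith)
  have hb0 : 0 ≤ b := by rw [hb]; exact mul_nonneg (by positivity) (by linarith)
  have hab : a + b = 1 := by rw [ha, hb]; field_simp; ring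
  rw [smul_add, smul_smul, smul_smul, ← ha, ← hb]
  have e : z - (a • x + b • y) = a • (z - x) + b • (z - y) := by
    have : z = a • z + b • z := by rw [← add_smul, hab, one_smul]
    nth_rewrite 1 [this]
    module
  rw [e]
  calc _ ≤ ‖a • (z - x)‖ + ‖b • (z - y)‖ := norm_add_le _ _
    _ = a * ‖z - x‖ + b * ‖z - y‖ := by
      rw [norm_smul, norm_smul, Real.norm_of_nonneg ha0, Real.norm_of_nonneg hb0]
    _ ≤ a * ε + b * ε := by gcongr
    _ = ε := by rw [← add_mul, hab, one_mul]

/-- If `I` is a good rate function on `C([0,T]; B)` (compact sublevel sets), then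
`inf { I(w) : sup_{t∈[0,T]} ‖w_t - w^{(N)}_t‖ ≥ δ } → +∞` as `N → ∞`, for every `δ > 0`. -/
theorem inf_rate_on_piecewiseLinear_far_tendsto_top
    {B : Type*} [NormedAddCommGroup B] [NormedSpace ℝ B]
    (T : ℝ) (hT : 0 < T)
    (I : C(Set.Icc (0 : ℝ) T, B) → ENNReal)
    (hI : ∀ r : ENNReal, r ≠ ⊤ → IsCompact {w : C(Set.Icc (0 : ℝ) T, B) | I w ≤ r})
    (δ : ℝ) (hδ : 0 < δ) :
    Tendsto
      (fun N : ℕ =>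
        ⨅ w ∈ {w : C(Set.Icc (0 : ℝ) T, B) |
            δ ≤ ⨆ t : Set.Icc (0 : ℝ) T, ‖w t - piecewiseLinear hT.le w N t‖}, I w)
      atTop (𝓝 ⊤) := by
  rw [ENNReal.tendsto_nhds_top_iff_nnreal]
  intro r
  have hK := hI (r + 1 : ENNReal) (by finiteness)
  set K := {w : C(Set.Icc (0 : ℝ) T, B) | I w ≤ (r + 1 : ENNReal)} with hKdef
  have huc : UniformContinuousOn
      (fun p : C(Set.Icc (0 : ℝ) T, B) × Set.Icc (0 : ℝ) T => p.1 p.2) (K ×ˢ Set.univ) :=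
    (hK.prod isCompact_univ).uniformContinuousOn_of_continuous (by fun_prop)
  rw [Metric.uniformContinuousOn_iff] at huc
  obtain ⟨η, hη, H⟩ := huc (δ / 2) (by positivity)
  have hlim : Tendsto (fun N : ℕ => T / (N : ℝ)) atTop (𝓝 0) :=
    tendsto_const_div_atTop_nhds_zero_nat T
  filter_upwards [hlim.eventually_lt_const hη, eventually_gt_atTop 0] with N hN hN0
  have hlt : (r : ENNReal) < r + 1 := ENNReal.lt_add_right (by simp) (by simp)
  refine hlt.trans_le ?_
  refine le_iInf₂ fun w hw => ?_
  by_contra hcon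
  have hwK : w ∈ K := (not_le.mp hcon).le
  have hb : (⨆ t : Set.Icc (0 : ℝ) T, ‖w t - piecewiseLinear hT.le w N t‖) ≤ δ / 2 := by
    refine Real.iSup_le (fun t => ?_) (by positivity)
    refine piecewiseLinear_dist_le hT w N hN0 _ (fun s t hst => ?_) t
    have := H (w, t) ⟨hwK, trivial⟩ (w, s) ⟨hwK, trivial⟩ (by
      rw [Prod.dist_eq, dist_self, max_eq_right dist_nonneg, Subtype.dist_eq, Real.dist_eq]
      exact hst.trans_lt hN)
    rw [← dist_eq_norm]
    exact this.le
  have hw' : δ ≤ _ := hw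
  linarith
end
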